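/- Let N ≥ 1, s ∈ (0, min(1, N/2)), R > 0, and u_ε(x) = [(1+|x|²/ε²)^{-(N-2s)/2} - (1+R²/ε²)^{-(N-2s)/2}] χ_{B_R(0)}(x). Then lim_{ε→0} ε^{-(N-2s)} ∫_{B_R(0)} ∫_{B_R(0)^c} u_ε(x)² / |x-y|^{N+2s} dy dx = 0. -/

import Mathlib

open Real MeasureTheory Filter

/-!
Choose `b > a` smaller than the dimension and at most `2 * a`. Interpolating the square of the
bubble between the bounds `1` and `(‖x‖ / ε) ^ (-2 * a)` gives `ε ^ b * ‖x‖ ^ (-b)`, a gain of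
`ε ^ (b - a)` over the normalisation, and vanishing on the sphere of radius `R` supplies a
further factor `(R - ‖x‖) ^ 2`. Points outside the ball are at distance at least `R - ‖x‖` from
`x`, so the kernel integrates over them to at most a multiple of `(R - ‖x‖) ^ (-2 * s)`, which
the boundary factor absorbs as `s ≤ 1`. What remains, `‖x‖ ^ (-b)`, is integrable on the ball.
-/

lemma one_sub_rpow_le_max_mul_one_sub {q p : ℝ} (hq0 : 0 ≤ q) (hq1 : q ≤ 1) (hp : 0 ≤ p) :
    1 - q ^ p ≤ max 1 p * (1 - q) := by
  rcases le_total p 1 with hp1 | hp1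
  · have : q ≤ q ^ p := by simpa using rpow_le_rpow_of_exponent_ge' hq0 hq1 hp hp1
    rw [max_eq_left hp1]
    linarith
  · have bernoulli := one_add_mul_self_le_rpow_one_add (s := q - 1) (by linarith) hp1
    rw [add_sub_cancel] at bernoulli
    rw [max_eq_right hp1]
    linarith

section BubbleProfile

variable {a b ε r R : ℝ}

/-- The radial profile of the bubble `x ↦ (1 + |x|² / ε²) ^ (-a / 2)` concentrating at scale `ε`;
in the fractional Sobolev setting `a = N - 2 * s`, and `u_ε(x)` is
`bubbleProfile a ε ‖x‖ - bubbleProfile a ε R` on the ball of radius `R`. -/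
noncomputable def bubbleProfile (a ε r : ℝ) : ℝ :=
  (1 + r ^ 2 / ε ^ 2) ^ (-a / 2)

lemma bubbleProfile_nonneg : 0 ≤ bubbleProfile a ε r := by
  unfold bubbleProfile
  positivity

lemma bubbleProfile_le_of_le (ha : 0 ≤ a) (hr : 0 ≤ r) (hrR : r ≤ R) :
    bubbleProfile a ε R ≤ bubbleProfile a ε r :=
  rpow_le_rpow_of_nonpos (by positivity) (by gcongr) (by linarith)

lemma bubbleProfile_sub_le (ha : 0 ≤ a) (hε : 0 < ε) (hR : 0 < R) (hr : 0 ≤ r) (hrR : r ≤ R) :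
    bubbleProfile a ε r - bubbleProfile a ε R ≤
      bubbleProfile a ε r * (max 1 (a / 2) * (2 / R) * (R - r)) := by
  set A := 1 + r ^ 2 / ε ^ 2 with hA
  set B := 1 + R ^ 2 / ε ^ 2 with hB
  have hA0 : 0 < A := by positivity
  have hB0 : 0 < B := by positivity
  have hAB : A / B ≤ 1 := (div_le_one hB0).2 (by rw [hA, hB]; gcongr)
  have ratio_gap : 1 - A / B ≤ 2 / R * (R - r) := by
    have factored : 1 - A / B = (R + r) / (ε ^ 2 + R ^ 2) * (R - r) := by
      rw [hA, hB]
      field_simp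
      ring
    rw [factored]
    refine mul_le_mul_of_nonneg_right ?_ (sub_nonneg.2 hrR)
    rw [div_le_div_iff₀ (by positivity) hR]
    nlinarith [sq_nonneg ε]
  have power_ratio : A ^ (-a / 2) * (A / B) ^ (a / 2) = B ^ (-a / 2) := by
    rw [div_rpow hA0.le hB0.le, neg_div, rpow_neg hA0.le, rpow_neg hB0.le,
      ← mul_div_assoc, inv_mul_cancel₀ (rpow_pos_of_pos hA0 _).ne', one_div]
  calc bubbleProfile a ε r - bubbleProfile a ε R
      = bubbleProfile a ε r * (1 - (A / B) ^ (a / 2)) := by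
        rw [mul_one_sub]
        exact congrArg _ power_ratio.symm
    _ ≤ bubbleProfile a ε r * (max 1 (a / 2) * (1 - A / B)) :=
        mul_le_mul_of_nonneg_left
          (one_sub_rpow_le_max_mul_one_sub (by positivity) hAB (by positivity))
          bubbleProfile_nonneg
    _ ≤ bubbleProfile a ε r * (max 1 (a / 2) * (2 / R) * (R - r)) := by
        rw [mul_assoc (max 1 (a / 2))]
        exact mul_le_mul_of_nonneg_left (by gcongr) bubbleProfile_nonneg

lemma bubbleProfile_sq_le (hb : 0 ≤ b) (hba : b ≤ 2 * a) (hε : 0 < ε) (hr : 0 < r) :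
    bubbleProfile a ε r ^ 2 ≤ ε ^ b * r ^ (-b) := by
  have hA : 1 ≤ 1 + r ^ 2 / ε ^ 2 := le_add_of_nonneg_right (by positivity)
  calc bubbleProfile a ε r ^ 2
      = (1 + r ^ 2 / ε ^ 2) ^ (-a) := by
        rw [bubbleProfile, ← rpow_mul_natCast (by positivity)]
        congr 1
        push_cast
        ring
    _ ≤ (1 + r ^ 2 / ε ^ 2) ^ (-(b / 2)) := rpow_le_rpow_of_exponent_le hA (by linarith)
    _ ≤ ((r / ε) ^ 2) ^ (-(b / 2)) :=
        rpow_le_rpow_of_nonpos (by positivity) (by rw [div_pow]; linarith) (by linarith)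
    _ = (r / ε) ^ (-b) := by
        rw [← rpow_natCast_mul (by positivity)]
        congr 1
        push_cast
        ring
    _ = ε ^ b * r ^ (-b) := by
        rw [div_rpow hr.le hε.le, rpow_neg hε.le, div_inv_eq_mul, mul_comm]

lemma bubbleProfile_sub_sq_le (hb : 0 ≤ b) (hba : b ≤ 2 * a) (hε : 0 < ε) (hr : 0 < r)
    (hrR : r ≤ R) :
    (bubbleProfile a ε r - bubbleProfile a ε R) ^ 2 ≤
      ε ^ b * r ^ (-b) * (max 1 (a / 2) * (2 / R) * (R - r)) ^ 2 := by
  have ha : 0 ≤ a := by linarith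
  calc (bubbleProfile a ε r - bubbleProfile a ε R) ^ 2
      ≤ (bubbleProfile a ε r * (max 1 (a / 2) * (2 / R) * (R - r))) ^ 2 :=
        pow_le_pow_left₀ (sub_nonneg.2 (bubbleProfile_le_of_le ha hr.le hrR))
          (bubbleProfile_sub_le ha hε (hr.trans_le hrR) hr.le hrR) 2
    _ ≤ ε ^ b * r ^ (-b) * (max 1 (a / 2) * (2 / R) * (R - r)) ^ 2 := by
        rw [mul_pow]
        exact mul_le_mul_of_nonneg_right (bubbleProfile_sq_le hb hba hε hr) (sq_nonneg _)

end BubbleProfile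

section NormPowers

open Metric Module

open scoped Pointwise

variable {E : Type*} [NormedAddCommGroup E] [NormedSpace ℝ E] [FiniteDimensional ℝ E]
  [MeasurableSpace E] [BorelSpace E] (μ : Measure E) [μ.IsAddHaarMeasure] {r ρ R : ℝ}

lemma integrableOn_ball_norm_rpow_neg (hd : 1 ≤ finrank ℝ E) (hr : r < finrank ℝ E) :
    IntegrableOn (fun x : E => ‖x‖ ^ (-r)) (ball 0 R) μ := by
  refine integrableOn_ball_of_norm_le_rpow (C := 1) hd hr (Eventually.of_forall fun x => ?_)
    (Measurable.aestronglyMeasurable (by fun_prop))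
  rw [one_mul, norm_of_nonneg (by positivity)]

lemma integrableOn_compl_ball_norm_rpow_neg (hr : finrank ℝ E < r) (hρ : 0 < ρ) :
    IntegrableOn (fun z : E => ‖z‖ ^ (-r)) (ball 0 ρ)ᶜ μ := by
  have japanese : Integrable (fun z : E => ((1 + ρ⁻¹)⁻¹ * (1 + ‖z‖)) ^ (-r)) μ := by
    simp_rw [mul_rpow (inv_nonneg.2 (by positivity : 0 ≤ 1 + ρ⁻¹))
      (by positivity : 0 ≤ 1 + ‖(_ : E)‖)]
    exact (integrable_one_add_norm hr).const_mul _
  refine japanese.integrableOn.mono' (Measurable.aestronglyMeasurable (by fun_prop)) ?_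
  refine ae_restrict_of_forall_mem measurableSet_ball.compl fun z hz => ?_
  have hρz : ρ ≤ ‖z‖ := by simpa using hz
  rw [norm_of_nonneg (by positivity)]
  refine rpow_le_rpow_of_nonpos (by positivity) ?_
    (neg_nonpos.2 ((Nat.cast_nonneg _).trans hr.le))
  rw [inv_mul_le_iff₀ (by positivity), add_mul, one_mul, add_comm]
  gcongr
  rwa [inv_mul_eq_div, one_le_div hρ]

lemma setIntegral_compl_ball_norm_rpow_neg (hρ : 0 < ρ) :
    ∫ z in (ball (0 : E) ρ)ᶜ, ‖z‖ ^ (-r) ∂μ =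
      ρ ^ (finrank ℝ E - r) * ∫ z in (ball (0 : E) 1)ᶜ, ‖z‖ ^ (-r) ∂μ := by
  have scaled_set : ρ • (ball (0 : E) 1)ᶜ = (ball 0 ρ)ᶜ := by
    rw [Set.compl_eq_univ_sdiff, Set.smul_set_sdiff₀ hρ.ne', Set.smul_set_univ₀ hρ.ne',
      smul_unitBall hρ.ne', norm_of_nonneg hρ.le, Set.compl_eq_univ_sdiff]
  have change_variables :=
    Measure.setIntegral_comp_smul_of_pos μ (fun z : E => ‖z‖ ^ (-r)) (ball 0 1)ᶜ hρ
  simp only [scaled_set, norm_smul, norm_of_nonneg hρ.le, mul_rpow hρ.le (norm_nonneg _),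
    integral_const_mul, smul_eq_mul] at change_variables
  rw [sub_eq_add_neg, rpow_add hρ, rpow_natCast, mul_assoc, change_variables,
    mul_inv_cancel_left₀ (by positivity)]

lemma setIntegral_compl_ball_norm_sub_rpow_neg_le {x : E} (hr : finrank ℝ E < r)
    (hx : ‖x‖ < R) :
    ∫ y in (ball (0 : E) R)ᶜ, ‖x - y‖ ^ (-r) ∂μ ≤
      (R - ‖x‖) ^ (finrank ℝ E - r) * ∫ z in (ball (0 : E) 1)ᶜ, ‖z‖ ^ (-r) ∂μ := by
  have hρ : 0 < R - ‖x‖ := sub_pos.2 hx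
  have preimage_eq : (fun y => x - y) ⁻¹' (ball (0 : E) (R - ‖x‖))ᶜ = (ball x (R - ‖x‖))ᶜ := by
    ext y
    simp [dist_eq_norm, norm_sub_rev]
  have translation := μ.measurePreserving_sub_left x
  have embedding := (MeasurableEquiv.subLeft x).measurableEmbedding
  have integrable : IntegrableOn (fun y => ‖x - y‖ ^ (-r)) (ball x (R - ‖x‖))ᶜ μ := by
    rw [← preimage_eq]
    exact (translation.integrableOn_comp_preimage embedding).2
      (integrableOn_compl_ball_norm_rpow_neg μ hr hρ)
  calc ∫ y in (ball (0 : E) R)ᶜ, ‖x - y‖ ^ (-r) ∂μ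
      ≤ ∫ y in (ball x (R - ‖x‖))ᶜ, ‖x - y‖ ^ (-r) ∂μ := by
        refine setIntegral_mono_set integrable (Eventually.of_forall fun y => by positivity)
          (Set.compl_subset_compl.2 (ball_subset ?_)).eventuallyLE
        simp
    _ = ∫ z in (ball (0 : E) (R - ‖x‖))ᶜ, ‖z‖ ^ (-r) ∂μ := by
        rw [← preimage_eq]
        exact translation.setIntegral_preimage_emb embedding (fun z => ‖z‖ ^ (-r)) _
    _ = (R - ‖x‖) ^ (finrank ℝ E - r) * ∫ z in (ball (0 : E) 1)ᶜ, ‖z‖ ^ (-r) ∂μ :=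
        setIntegral_compl_ball_norm_rpow_neg μ hρ

end NormPowers

section CrossTerm

open Metric Module

variable {E : Type*} [NormedAddCommGroup E] [NormedSpace ℝ E]
  [MeasurableSpace E] (μ : Measure E) {a b s ε R : ℝ}

/-- The part of the Gagliardo energy of the truncated bubble `u_ε` that couples the ball of radius
`R` to its complement, where `u_ε` vanishes. The decay exponent `a` of the bubble and the order `s`
of the kernel are independent parameters. -/
noncomputable def bubbleCrossTerm (a s R ε : ℝ) : ℝ :=
  ∫ x in ball (0 : E) R, ∫ y in (ball (0 : E) R)ᶜ,
    (bubbleProfile a ε ‖x‖ - bubbleProfile a ε R) ^ 2 / ‖x - y‖ ^ (finrank ℝ E + 2 * s) ∂μ ∂μ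

lemma bubbleCrossTerm_nonneg : 0 ≤ bubbleCrossTerm μ a s R ε :=
  integral_nonneg fun x => integral_nonneg fun y => by positivity

variable [FiniteDimensional ℝ E] [BorelSpace E] [μ.IsAddHaarMeasure]

lemma setIntegral_bubble_sub_sq_div_le {x : E} (hb : 0 ≤ b) (hba : b ≤ 2 * a) (hs0 : 0 < s)
    (hs1 : s ≤ 1) (hε : 0 < ε) (hx0 : x ≠ 0) (hxR : ‖x‖ < R) :
    ∫ y in (ball (0 : E) R)ᶜ, (bubbleProfile a ε ‖x‖ - bubbleProfile a ε R) ^ 2 /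
        ‖x - y‖ ^ (finrank ℝ E + 2 * s) ∂μ ≤
      (max 1 (a / 2) * (2 / R)) ^ 2 * R ^ (2 - 2 * s) *
        (∫ z in (ball (0 : E) 1)ᶜ, ‖z‖ ^ (-(finrank ℝ E + 2 * s)) ∂μ) * ε ^ b * ‖x‖ ^ (-b) := by
  set T := ∫ z in (ball (0 : E) 1)ᶜ, ‖z‖ ^ (-(finrank ℝ E + 2 * s)) ∂μ
  have hρ : 0 < R - ‖x‖ := sub_pos.2 hxR
  have kernel_le : ∫ y in (ball (0 : E) R)ᶜ, ‖x - y‖ ^ (-(finrank ℝ E + 2 * s)) ∂μ ≤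
      (R - ‖x‖) ^ (-(2 * s)) * T := by
    simpa only [sub_add_cancel_left] using
      setIntegral_compl_ball_norm_sub_rpow_neg_le μ (lt_add_of_pos_right _ (by positivity)) hxR
  have boundary_le : (R - ‖x‖) ^ 2 * (R - ‖x‖) ^ (-(2 * s)) ≤ R ^ (2 - 2 * s) := by
    rw [← rpow_two, ← rpow_add hρ, ← sub_eq_add_neg]
    exact rpow_le_rpow hρ.le (sub_le_self R (norm_nonneg x)) (by linarith)
  simp only [div_eq_mul_inv (_ ^ 2), ← rpow_neg (norm_nonneg _), integral_const_mul]
  calc (bubbleProfile a ε ‖x‖ - bubbleProfile a ε R) ^ 2 *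
        ∫ y in (ball (0 : E) R)ᶜ, ‖x - y‖ ^ (-(finrank ℝ E + 2 * s)) ∂μ
      ≤ ε ^ b * ‖x‖ ^ (-b) * (max 1 (a / 2) * (2 / R) * (R - ‖x‖)) ^ 2 *
          ((R - ‖x‖) ^ (-(2 * s)) * T) :=
        mul_le_mul (bubbleProfile_sub_sq_le hb hba hε (norm_pos_iff.2 hx0) hxR.le) kernel_le
          (integral_nonneg fun y => by positivity) (by positivity)
    _ = (max 1 (a / 2) * (2 / R)) ^ 2 * ((R - ‖x‖) ^ 2 * (R - ‖x‖) ^ (-(2 * s))) *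
          T * ε ^ b * ‖x‖ ^ (-b) := by ring
    _ ≤ (max 1 (a / 2) * (2 / R)) ^ 2 * R ^ (2 - 2 * s) * T * ε ^ b * ‖x‖ ^ (-b) := by gcongr

lemma exists_bubbleCrossTerm_le (hb : 0 < b) (hba : b ≤ 2 * a) (hbd : b < finrank ℝ E)
    (hs0 : 0 < s) (hs1 : s ≤ 1) :
    ∃ C, ∀ ε, 0 < ε → bubbleCrossTerm μ a s R ε ≤ C * ε ^ b := by
  have hd : 0 < finrank ℝ E := Nat.cast_pos.1 (hb.trans hbd)
  have : Nontrivial E := nontrivial_of_finrank_pos hd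
  let K := (max 1 (a / 2) * (2 / R)) ^ 2 * R ^ (2 - 2 * s) *
    ∫ z in (ball (0 : E) 1)ᶜ, ‖z‖ ^ (-(finrank ℝ E + 2 * s)) ∂μ
  refine ⟨K * ∫ x in ball (0 : E) R, ‖x‖ ^ (-b) ∂μ, fun ε hε => ?_⟩
  calc bubbleCrossTerm μ a s R ε
      ≤ ∫ x in ball (0 : E) R, K * ε ^ b * ‖x‖ ^ (-b) ∂μ := by
        refine integral_mono_of_nonneg
          (Eventually.of_forall fun x => integral_nonneg fun y => by positivity)
          ((integrableOn_ball_norm_rpow_neg μ hd hbd).const_mul _) ?_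
        filter_upwards [ae_restrict_mem measurableSet_ball, ae_restrict_of_ae (μ.ae_ne 0)]
          with x hxR hx0
        exact setIntegral_bubble_sub_sq_div_le μ hb.le hba hs0 hs1 hε hx0 (mem_ball_zero_iff.1 hxR)
    _ = K * (∫ x in ball (0 : E) R, ‖x‖ ^ (-b) ∂μ) * ε ^ b := by
        rw [integral_const_mul, mul_right_comm]

theorem rescaled_cross_term_vanishes_general (ha0 : 0 < a) (had : a < finrank ℝ E)
    (hs0 : 0 < s) (hs1 : s ≤ 1) :
    Tendsto (fun ε : ℝ => ε ^ (-a) * bubbleCrossTerm μ a s R ε)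
      (nhdsWithin 0 (Set.Ioi 0)) (nhds 0) := by
  obtain ⟨b, hab, hb⟩ := exists_between (lt_min (by linarith : a < 2 * a) had)
  obtain ⟨hba, hbd⟩ := lt_min_iff.1 hb
  obtain ⟨C, hC⟩ := exists_bubbleCrossTerm_le μ (R := R) (ha0.trans hab) hba.le hbd hs0 hs1
  have majorant_tendsto : Tendsto (fun ε : ℝ => C * ε ^ (b - a))
      (nhdsWithin 0 (Set.Ioi 0)) (nhds 0) := by
    have := ((continuous_rpow_const (sub_pos.2 hab).le).const_mul C).tendsto 0
    rw [zero_rpow (sub_pos.2 hab).ne', mul_zero] at this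
    exact this.mono_left nhdsWithin_le_nhds
  refine squeeze_zero' ?_ ?_ majorant_tendsto <;>
    filter_upwards [self_mem_nhdsWithin] with ε (hε : 0 < ε)
  · exact mul_nonneg (by positivity) (bubbleCrossTerm_nonneg μ)
  · calc ε ^ (-a) * bubbleCrossTerm μ a s R ε ≤ ε ^ (-a) * (C * ε ^ b) := by
          gcongr
          exact hC ε hε
      _ = C * ε ^ (b - a) := by
          rw [sub_eq_add_neg, rpow_add hε]
          ring

end CrossTerm

theorem rescaled_cross_term_vanishes (N : ℕ) (hN : 1 ≤ N) (s : ℝ)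
    (hs0 : 0 < s) (hs1 : s < min 1 ((N : ℝ) / 2)) (R : ℝ) (hR : 0 < R) :
    Tendsto
      (fun ε : ℝ =>
        ε ^ (-(((N : ℝ) - 2 * s))) *
          ∫ x in Metric.ball (0 : EuclideanSpace ℝ (Fin N)) R,
            ∫ y in (Metric.ball (0 : EuclideanSpace ℝ (Fin N)) R)ᶜ,
              ((1 + ‖x‖ ^ 2 / ε ^ 2) ^ (-(((N : ℝ) - 2 * s)) / 2) -
                  (1 + R ^ 2 / ε ^ 2) ^ (-(((N : ℝ) - 2 * s)) / 2)) ^ 2 /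
                ‖x - y‖ ^ ((N : ℝ) + 2 * s))
      (nhdsWithin 0 (Set.Ioi 0)) (nhds 0) := by
  obtain ⟨hs_one, hs_half⟩ := lt_min_iff.1 hs1
  simpa only [bubbleCrossTerm, bubbleProfile, finrank_euclideanSpace_fin] using
    rescaled_cross_term_vanishes_general (E := EuclideanSpace ℝ (Fin N)) volume (R := R)
      (a := N - 2 * s) (by linarith) (by simpa using hs0) hs0 hs_one.le
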